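/- Let C be a binary linear code of length N with minimum distance d_min, used over the binary erasure channel, and let ε* ∈ (0,1) satisfy P_MAP(ε*) = 1/2. Then for all 0 < ε < ε*, P_MAP(ε) ≤ Φ(√(2·d_min)·(√(−ln ε*) − √(−ln ε))), and for all ε* < ε < 1, P_MAP(ε) ≥ Φ(√(2·d_min)·(√(−ln ε*) − √(−ln ε))). -/

import Mathlib

open scoped Classical
open Finset

noncomputable section

/-- Erasure/error patterns and codewords: vectors in 𝔽₂^N. -/
abbrev Pattern (N : ℕ) := Fin N → ZMod 2

/-- Hamming weight. -/
def wH {N : ℕ} (x : Pattern N) : ℕ := hammingNorm x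

/-- `ω` covers `x` if the support of `x` is contained in the support of `ω`. -/
def covers {N : ℕ} (ω x : Pattern N) : Prop := ∀ i, x i ≠ 0 → ω i ≠ 0

/-- Product Bernoulli(ε) measure of a set of patterns. -/
def muE {N : ℕ} (ε : ℝ) (S : Finset (Pattern N)) : ℝ :=
  ∑ ω ∈ S, ε ^ wH ω * (1 - ε) ^ (N - wH ω)

/-- Erasure patterns causing a block-MAP error over the BEC:
those covering at least one nonzero codeword. -/
def errBEC {N : ℕ} (C : Submodule (ZMod 2) (Pattern N)) : Finset (Pattern N) :=
  univ.filter (fun ω => ∃ x ∈ C, x ≠ 0 ∧ covers ω x)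

/-- Block-MAP error probability over BEC(ε). -/
def Pmap {N : ℕ} (C : Submodule (ZMod 2) (Pattern N)) (ε : ℝ) : ℝ :=
  muE ε (errBEC C)

/-- Standard normal CDF. -/
def Phi (x : ℝ) : ℝ := ∫ u in Set.Iic x, Real.exp (-u ^ 2 / 2) / Real.sqrt (2 * Real.pi)

open Filter Topology MeasureTheory ProbabilityTheory

/-!
Restoring an erased coordinate of a pattern in the error event `Ω` may take it out of `Ω`; call
such a coordinate pivotal and let `h` be the number of pivotal coordinates. The Margulis–Russo
formula reads `p * d/dp μ_p(Ω) = E_p h`. With `I = φ ∘ Φ⁻¹` the Gaussian isoperimetric profile, a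
two-point inequality in the manner of Bobkov tensorizes to
`I (μ_p(Ω)) ≤ E_p √(-2 * log p * h)`.

If `h ≠ 0` at some pattern, that pattern covers exactly one nonzero codeword: over `𝔽₂`, the
difference of two of them would vanish at the pivotal coordinate. The support of this codeword is
then entirely pivotal, so `h` takes no value strictly between `0` and `d = d_min`, whence
`√(2 * d) * I (μ_p(Ω)) ≤ 2 * √(-log p) * p * d/dp μ_p(Ω)`. As `(Φ⁻¹)' = 1 / I`, this says that
`Φ⁻¹ (μ_p(Ω)) + √(2 * d) * √(-log p)` is nondecreasing in `p`.
-/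

lemma nonneg_of_hasDerivAt_nonneg {f f' : ℝ → ℝ} {a b : ℝ} (hab : a ≤ b)
    (hf : ∀ x ∈ Set.Icc a b, HasDerivAt f (f' x) x) (hf' : ∀ x ∈ Set.Icc a b, 0 ≤ f' x)
    (ha : 0 ≤ f a) : 0 ≤ f b := by
  have mono : MonotoneOn f (Set.Icc a b) :=
    monotoneOn_of_hasDerivWithinAt_nonneg (convex_Icc a b)
      (fun x hx => (hf x hx).continuousAt.continuousWithinAt)
      (fun x hx => (hf x (interior_subset hx)).hasDerivWithinAt)
      (fun x hx => hf' x (interior_subset hx))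
  exact ha.trans (mono (Set.left_mem_Icc.2 hab) (Set.right_mem_Icc.2 hab) hab)

lemma sqrt_sum_sq_add_sum_sq_le {ι : Type*} (s : Finset ι) (f g : ι → ℝ) :
    √((∑ i ∈ s, f i) ^ 2 + (∑ i ∈ s, g i) ^ 2) ≤ ∑ i ∈ s, √(f i ^ 2 + g i ^ 2) := by
  simpa only [sum_add_distrib, ← sum_mul, ← Complex.ofReal_sum, Complex.norm_add_mul_I] using
    norm_sum_le s fun i => (f i + g i * Complex.I : ℂ)

/-! ### The standard normal law -/

lemma hasDerivAt_gaussianPDFReal (μ : ℝ) (v : NNReal) (x : ℝ) :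
    HasDerivAt (gaussianPDFReal μ v) (-((x - μ) / v) * gaussianPDFReal μ v x) x := by
  have exponent : HasDerivAt (fun y : ℝ => -(y - μ) ^ 2 / (2 * v)) (-((x - μ) / v)) x := by
    refine ((((hasDerivAt_id x).sub_const μ).pow 2).neg.div_const (2 * (v : ℝ))).congr_deriv ?_
    simp only [id, Nat.cast_ofNat, Nat.add_one_sub_one, pow_one, mul_one, neg_div]
    rw [mul_div_mul_left _ _ two_ne_zero]
  refine (exponent.exp.const_mul (√(2 * Real.pi * v))⁻¹).congr_deriv ?_
  rw [gaussianPDFReal_def]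
  ring

local notation "φ" => gaussianPDFReal 0 1

lemma hasDerivAt_stdGaussianPDFReal (x : ℝ) : HasDerivAt φ (-x * φ x) x := by
  simpa using hasDerivAt_gaussianPDFReal 0 1 x

lemma continuous_gaussianPDFReal (μ : ℝ) (v : NNReal) : Continuous (gaussianPDFReal μ v) :=
  continuous_iff_continuousAt.2 fun x => (hasDerivAt_gaussianPDFReal μ v x).continuousAt

lemma stdGaussianPDFReal_pos (x : ℝ) : 0 < φ x := gaussianPDFReal_pos 0 1 x one_ne_zero

lemma stdGaussianPDFReal_neg (x : ℝ) : φ (-x) = φ x := by simp [gaussianPDFReal_def]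

lemma tendsto_stdGaussianPDFReal_atBot : Tendsto φ atBot (𝓝 0) := by
  have h := (tendsto_rpow_abs_mul_exp_neg_mul_sq_cocompact (one_half_pos (α := ℝ)) 0).const_mul
    (√(2 * Real.pi))⁻¹
  rw [mul_zero] at h
  refine (h.mono_left atBot_le_cocompact).congr fun x => ?_
  simp only [gaussianPDFReal_def, Real.rpow_zero, NNReal.coe_one]
  ring_nf

lemma Phi_eq_setIntegral (x : ℝ) : Phi x = ∫ u in Set.Iic x, φ u := by
  simp [Phi, gaussianPDFReal_def, div_eq_inv_mul]

lemma Phi_eq_cdf : Phi = cdf (gaussianReal 0 1) := by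
  funext x
  rw [cdf_eq_real, measureReal_def, gaussianReal_apply_eq_integral 0 one_ne_zero,
    ENNReal.toReal_ofReal (integral_nonneg (gaussianPDFReal_nonneg 0 1)), Phi_eq_setIntegral]

lemma Phi_neg (x : ℝ) : Phi (-x) = 1 - Phi x := by
  have hint : Integrable φ := integrable_gaussianPDFReal 0 1
  have tail : Phi (-x) = ∫ u in Set.Ioi x, φ u := by
    simpa [Phi_eq_setIntegral, stdGaussianPDFReal_neg] using integral_comp_neg_Iic (-x) φ
  rw [tail, Phi_eq_setIntegral, eq_sub_iff_add_eq', ← integral_gaussianPDFReal_eq_one 0 one_ne_zero]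
  exact intervalIntegral.integral_Iic_add_Ioi hint.integrableOn hint.integrableOn

lemma Phi_zero : Phi 0 = 1 / 2 := by
  have := Phi_neg 0
  rw [neg_zero] at this
  linarith

lemma hasDerivAt_Phi (x : ℝ) : HasDerivAt Phi (φ x) x := by
  have hcont : Continuous φ := continuous_gaussianPDFReal 0 1
  have hint : Integrable φ := integrable_gaussianPDFReal 0 1
  have split : Phi = fun y => Phi 0 + ∫ u in (0 : ℝ)..y, φ u := by
    funext y
    simp only [Phi_eq_setIntegral, ← intervalIntegral.integral_Iic_sub_Iic hint.integrableOn
      hint.integrableOn, add_sub_cancel]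
  rw [split]
  exact (hcont.integral_hasStrictDerivAt 0 x).hasDerivAt.const_add _

lemma continuous_Phi : Continuous Phi :=
  continuous_iff_continuousAt.2 fun x => (hasDerivAt_Phi x).continuousAt

lemma strictMono_Phi : StrictMono Phi :=
  strictMono_of_hasDerivAt_pos hasDerivAt_Phi stdGaussianPDFReal_pos

lemma tendsto_Phi_atBot : Tendsto Phi atBot (𝓝 0) := by
  rw [Phi_eq_cdf]
  exact tendsto_cdf_atBot _

lemma tendsto_Phi_atTop : Tendsto Phi atTop (𝓝 1) := by
  rw [Phi_eq_cdf]
  exact tendsto_cdf_atTop _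

lemma Phi_mem_Ioo (x : ℝ) : Phi x ∈ Set.Ioo (0 : ℝ) 1 :=
  ⟨(strictMono_Phi.monotone.le_of_tendsto tendsto_Phi_atBot _).trans_lt
      (strictMono_Phi (sub_one_lt x)),
    (strictMono_Phi (lt_add_one x)).trans_le
      (strictMono_Phi.monotone.ge_of_tendsto tendsto_Phi_atTop _)⟩

lemma range_Phi : Set.range Phi = Set.Ioo 0 1 := by
  refine (Set.range_subset_iff.2 Phi_mem_Ioo).antisymm fun t ht => ?_
  obtain ⟨x, hx⟩ := (tendsto_Phi_atBot.eventually_lt_const ht.1).exists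
  obtain ⟨y, hy⟩ := (tendsto_Phi_atTop.eventually_const_lt ht.2).exists
  exact mem_range_of_exists_le_of_exists_ge continuous_Phi ⟨x, hx.le⟩ ⟨y, hy.le⟩

/-! ### The Gaussian isoperimetric profile -/

/-- The quantile function `Φ⁻¹` of the standard normal law; its values outside `(0, 1)` are
arbitrary. -/
def normalQuantile : ℝ → ℝ := Function.invFun Phi

lemma Phi_normalQuantile {t : ℝ} (ht : t ∈ Set.Ioo (0 : ℝ) 1) : Phi (normalQuantile t) = t :=
  Function.invFun_eq (range_Phi.ge ht)

lemma normalQuantile_Phi (x : ℝ) : normalQuantile (Phi x) = x :=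
  Function.leftInverse_invFun strictMono_Phi.injective x

lemma normalQuantile_lt_iff {t x : ℝ} (ht : t ∈ Set.Ioo (0 : ℝ) 1) :
    normalQuantile t < x ↔ t < Phi x := by
  rw [← strictMono_Phi.lt_iff_lt, Phi_normalQuantile ht]

lemma lt_normalQuantile_iff {t x : ℝ} (ht : t ∈ Set.Ioo (0 : ℝ) 1) :
    x < normalQuantile t ↔ Phi x < t := by
  rw [← strictMono_Phi.lt_iff_lt, Phi_normalQuantile ht]

lemma normalQuantile_one_sub {t : ℝ} (ht : t ∈ Set.Ioo (0 : ℝ) 1) :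
    normalQuantile (1 - t) = -normalQuantile t := by
  rw [← normalQuantile_Phi (-normalQuantile t), Phi_neg, Phi_normalQuantile ht]

lemma continuousAt_normalQuantile {t : ℝ} (ht : t ∈ Set.Ioo (0 : ℝ) 1) :
    ContinuousAt normalQuantile t := by
  refine tendsto_order.2 ⟨fun x hx => ?_, fun x hx => ?_⟩
  · filter_upwards [isOpen_Ioo.mem_nhds ht, lt_mem_nhds ((lt_normalQuantile_iff ht).1 hx)]
      with s hs hxs using (lt_normalQuantile_iff hs).2 hxs
  · filter_upwards [isOpen_Ioo.mem_nhds ht, gt_mem_nhds ((normalQuantile_lt_iff ht).1 hx)]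
      with s hs hsx using (normalQuantile_lt_iff hs).2 hsx

/-- The Gaussian isoperimetric profile `I = φ ∘ Φ⁻¹` on `(0, 1)`, extended by zero. -/
def gaussianProfile (t : ℝ) : ℝ := if t ∈ Set.Ioo (0 : ℝ) 1 then φ (normalQuantile t) else 0

lemma gaussianProfile_of_mem {t : ℝ} (ht : t ∈ Set.Ioo (0 : ℝ) 1) :
    gaussianProfile t = φ (normalQuantile t) := if_pos ht

lemma gaussianProfile_of_notMem {t : ℝ} (ht : t ∉ Set.Ioo (0 : ℝ) 1) : gaussianProfile t = 0 :=
  if_neg ht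

lemma gaussianProfile_pos {t : ℝ} (ht : t ∈ Set.Ioo (0 : ℝ) 1) : 0 < gaussianProfile t := by
  rw [gaussianProfile_of_mem ht]
  exact stdGaussianPDFReal_pos _

lemma gaussianProfile_nonneg (t : ℝ) : 0 ≤ gaussianProfile t := by
  by_cases ht : t ∈ Set.Ioo (0 : ℝ) 1
  · exact (gaussianProfile_pos ht).le
  · exact (gaussianProfile_of_notMem ht).ge

lemma gaussianProfile_one_sub (t : ℝ) : gaussianProfile (1 - t) = gaussianProfile t := by
  have hmem : 1 - t ∈ Set.Ioo (0 : ℝ) 1 ↔ t ∈ Set.Ioo (0 : ℝ) 1 := by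
    simp [and_comm]
  by_cases ht : t ∈ Set.Ioo (0 : ℝ) 1
  · rw [gaussianProfile_of_mem ht, gaussianProfile_of_mem (hmem.2 ht), normalQuantile_one_sub ht,
      stdGaussianPDFReal_neg]
  · rw [gaussianProfile_of_notMem ht, gaussianProfile_of_notMem (hmem.not.2 ht)]

lemma hasDerivAt_normalQuantile {t : ℝ} (ht : t ∈ Set.Ioo (0 : ℝ) 1) :
    HasDerivAt normalQuantile (gaussianProfile t)⁻¹ t := by
  rw [gaussianProfile_of_mem ht]
  exact (hasDerivAt_Phi _).of_local_left_inverse (continuousAt_normalQuantile ht)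
    (stdGaussianPDFReal_pos _).ne'
    (eventually_of_mem (isOpen_Ioo.mem_nhds ht) fun _ => Phi_normalQuantile)

lemma hasDerivAt_gaussianProfile {t : ℝ} (ht : t ∈ Set.Ioo (0 : ℝ) 1) :
    HasDerivAt gaussianProfile (-normalQuantile t) t := by
  have chain := (hasDerivAt_stdGaussianPDFReal _).comp t (hasDerivAt_normalQuantile ht)
  rw [mul_assoc, ← gaussianProfile_of_mem ht, mul_inv_cancel₀ (gaussianProfile_pos ht).ne',
    mul_one] at chain
  refine chain.congr_of_eventuallyEq ?_
  filter_upwards [isOpen_Ioo.mem_nhds ht] with s hs using gaussianProfile_of_mem hs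

lemma continuousAt_gaussianProfile_of_nonpos {t : ℝ} (ht : t ≤ 0) :
    ContinuousAt gaussianProfile t := by
  rw [ContinuousAt, gaussianProfile_of_notMem fun h => ht.not_gt h.1]
  refine tendsto_order.2 ⟨fun a ha => .of_forall fun s => ha.trans_le (gaussianProfile_nonneg s),
    fun a ha => ?_⟩
  obtain ⟨x, hx⟩ := eventually_atBot.1 (tendsto_stdGaussianPDFReal_atBot.eventually_lt_const ha)
  filter_upwards [gt_mem_nhds (ht.trans_lt (Phi_mem_Ioo x).1)] with s hsx
  by_cases hs : s ∈ Set.Ioo (0 : ℝ) 1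
  · rw [gaussianProfile_of_mem hs]
    exact hx _ ((normalQuantile_lt_iff hs).2 hsx).le
  · rwa [gaussianProfile_of_notMem hs]

lemma continuous_gaussianProfile : Continuous gaussianProfile := by
  refine continuous_iff_continuousAt.2 fun t => ?_
  rcases le_or_gt t 0 with h0 | h0
  · exact continuousAt_gaussianProfile_of_nonpos h0
  rcases lt_or_ge t 1 with h1 | h1
  · exact (hasDerivAt_gaussianProfile ⟨h0, h1⟩).continuousAt
  · rw [← funext gaussianProfile_one_sub]
    exact (continuousAt_gaussianProfile_of_nonpos (sub_nonpos.2 h1)).comp (f := fun s => 1 - s)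
      (by fun_prop)

/-- The height, above the Gaussian profile at `b`, of its tangent line at `t`; recall that the
slope of the profile at `t` is `-Φ⁻¹(t)`. -/
def tangentGap (b t : ℝ) : ℝ :=
  gaussianProfile t - gaussianProfile b + normalQuantile t * (t - b)

lemma hasDerivAt_tangentGap {t : ℝ} (b : ℝ) (ht : t ∈ Set.Ioo (0 : ℝ) 1) :
    HasDerivAt (tangentGap b) ((t - b) / gaussianProfile t) t := by
  refine (((hasDerivAt_gaussianProfile ht).sub_const _).add
    ((hasDerivAt_normalQuantile ht).mul ((hasDerivAt_id t).sub_const b))).congr_deriv ?_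
  simp only [id]
  ring

lemma tangentGap_self (t : ℝ) : tangentGap t t = 0 := by simp [tangentGap]

section TangentGap

variable {b t : ℝ}

/- The next three estimates are successive antiderivatives in `t`. With `I` the profile and `D`
the gap, `I' = -Φ⁻¹` and `(Φ⁻¹)' = 1 / I` give `D' = (t - b) / I`,
`((t - b) + Φ⁻¹(t) D)' = (2 D + I(b)) / I` and
`((t - b) ^ 2 - I D)' = (t - b) + Φ⁻¹(t) D`, and all three functions vanish at `t = b`. -/

lemma tangentGap_nonneg_of_pos (hb : 0 < b) (hbt : b ≤ t) (ht : t < 1) : 0 ≤ tangentGap b t :=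
  nonneg_of_hasDerivAt_nonneg hbt
    (fun _ hx => hasDerivAt_tangentGap b ⟨hb.trans_le hx.1, hx.2.trans_lt ht⟩)
    (fun _ hx => div_nonneg (sub_nonneg.2 hx.1) (gaussianProfile_nonneg _)) (tangentGap_self b).ge

lemma sub_add_normalQuantile_mul_tangentGap_nonneg (hb : 0 < b) (hbt : b ≤ t) (ht : t < 1) :
    0 ≤ t - b + normalQuantile t * tangentGap b t := by
  refine nonneg_of_hasDerivAt_nonneg (f := fun x => x - b + normalQuantile x * tangentGap b x)
    (f' := fun x => (2 * tangentGap b x + gaussianProfile b) / gaussianProfile x) hbt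
    (fun x hx => ?_) (fun x hx => ?_) (by simp [tangentGap_self])
  · have hx' : x ∈ Set.Ioo (0 : ℝ) 1 := ⟨hb.trans_le hx.1, hx.2.trans_lt ht⟩
    refine (((hasDerivAt_id x).sub_const b).add
      ((hasDerivAt_normalQuantile hx').mul (hasDerivAt_tangentGap b hx'))).congr_deriv ?_
    have := (gaussianProfile_pos hx').ne'
    simp only [tangentGap]
    field_simp
    ring
  · have := tangentGap_nonneg_of_pos hb hx.1 (hx.2.trans_lt ht)
    have := gaussianProfile_nonneg b
    have := gaussianProfile_nonneg x
    positivity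

lemma gaussianProfile_mul_tangentGap_le_of_pos (hb : 0 < b) (hbt : b ≤ t) (ht : t < 1) :
    gaussianProfile t * tangentGap b t ≤ (t - b) ^ 2 := by
  refine sub_nonneg.1 (nonneg_of_hasDerivAt_nonneg
    (f := fun x => (x - b) ^ 2 - gaussianProfile x * tangentGap b x)
    (f' := fun x => x - b + normalQuantile x * tangentGap b x) hbt
    (fun x hx => ?_)
    (fun x hx => sub_add_normalQuantile_mul_tangentGap_nonneg hb hx.1 (hx.2.trans_lt ht))
    (by simp [tangentGap_self]))
  have hx' : x ∈ Set.Ioo (0 : ℝ) 1 := ⟨hb.trans_le hx.1, hx.2.trans_lt ht⟩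
  refine ((((hasDerivAt_id x).sub_const b).pow 2).sub
    ((hasDerivAt_gaussianProfile hx').mul (hasDerivAt_tangentGap b hx'))).congr_deriv ?_
  have := (gaussianProfile_pos hx').ne'
  simp only [id]
  field_simp
  ring

lemma continuous_tangentGap_left (t : ℝ) : Continuous fun b => tangentGap b t := by
  have := continuous_gaussianProfile
  unfold tangentGap
  fun_prop

lemma tangentGap_nonneg (hb : 0 ≤ b) (hbt : b ≤ t) (ht : t ∈ Set.Ioo (0 : ℝ) 1) :
    0 ≤ tangentGap b t :=
  le_on_closure (s := Set.Ioc 0 t) (fun _ hx => tangentGap_nonneg_of_pos hx.1 hx.2 ht.2)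
    continuousOn_const (continuous_tangentGap_left t).continuousOn
    (by rw [closure_Ioc ht.1.ne]; exact ⟨hb, hbt⟩)

lemma gaussianProfile_mul_tangentGap_le (hb : 0 ≤ b) (hbt : b ≤ t) (ht : t ∈ Set.Ioo (0 : ℝ) 1) :
    gaussianProfile t * tangentGap b t ≤ (t - b) ^ 2 :=
  le_on_closure (s := Set.Ioc 0 t)
    (fun _ hx => gaussianProfile_mul_tangentGap_le_of_pos hx.1 hx.2 ht.2)
    (continuous_const.mul (continuous_tangentGap_left t)).continuousOn (by fun_prop)
    (by rw [closure_Ioc ht.1.ne]; exact ⟨hb, hbt⟩)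

end TangentGap

/-- The value at `b + δ` of the chord of the Gaussian profile through `b` and `b + s * δ`. -/
def chordValue (b δ s : ℝ) : ℝ :=
  gaussianProfile b + (gaussianProfile (b + s * δ) - gaussianProfile b) / s

lemma hasDerivAt_chordValue {b δ s : ℝ} (hs : s ≠ 0) (ht : b + s * δ ∈ Set.Ioo (0 : ℝ) 1) :
    HasDerivAt (chordValue b δ) (-tangentGap b (b + s * δ) / s ^ 2) s := by
  have segment : HasDerivAt (fun r => b + r * δ) δ s := by
    simpa using ((hasDerivAt_id s).mul_const δ).const_add b
  have profile := (hasDerivAt_gaussianProfile ht).comp s segment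
  refine (((profile.sub_const (gaussianProfile b)).div (hasDerivAt_id s) hs).const_add
    _).congr_deriv ?_
  simp only [Function.comp, id, tangentGap]
  ring

lemma chordValue_mul_tangentGap_le {b δ s : ℝ} (hb : 0 ≤ b) (hδ : 0 ≤ δ) (hs0 : 0 < s)
    (hs1 : s ≤ 1) (ht : b + s * δ ∈ Set.Ioo (0 : ℝ) 1) :
    s * chordValue b δ s * tangentGap b (b + s * δ) ≤ (s * δ) ^ 2 := by
  have hbt : b ≤ b + s * δ := le_add_of_nonneg_right (by positivity)
  have chord_le : s * chordValue b δ s ≤ gaussianProfile (b + s * δ) := by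
    have : s * chordValue b δ s = gaussianProfile (b + s * δ) - (1 - s) * gaussianProfile b := by
      rw [chordValue]
      field_simp
      ring
    rw [this]
    exact sub_le_self _ (mul_nonneg (sub_nonneg.2 hs1) (gaussianProfile_nonneg b))
  calc s * chordValue b δ s * tangentGap b (b + s * δ)
      ≤ gaussianProfile (b + s * δ) * tangentGap b (b + s * δ) :=
        mul_le_mul_of_nonneg_right chord_le (tangentGap_nonneg hb hbt ht)
    _ ≤ (b + s * δ - b) ^ 2 := gaussianProfile_mul_tangentGap_le hb hbt ht
    _ = (s * δ) ^ 2 := by rw [add_sub_cancel_left]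

lemma monotoneOn_chordValue_sq_add_log {b δ : ℝ} (hb : 0 ≤ b) (hδ : 0 < δ) (hbδ : b + δ ≤ 1) :
    MonotoneOn (fun s => chordValue b δ s ^ 2 + 2 * δ ^ 2 * Real.log s) (Set.Ioc 0 1) := by
  have hmem : ∀ s ∈ Set.Ioo (0 : ℝ) 1, b + s * δ ∈ Set.Ioo (0 : ℝ) 1 := fun s hs =>
    ⟨add_pos_of_nonneg_of_pos hb (mul_pos hs.1 hδ),
      (add_lt_add_right (mul_lt_of_lt_one_left hδ hs.2) b).trans_le hbδ⟩
  refine monotoneOn_of_hasDerivWithinAt_nonneg (convex_Ioc 0 1)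
    (f' := fun s => 2 / s ^ 3 *
      ((s * δ) ^ 2 - s * chordValue b δ s * tangentGap b (b + s * δ)))
    (fun s hs => ContinuousAt.continuousWithinAt ?_) ?_ ?_
  · have := continuous_gaussianProfile
    have hs0 : s ≠ 0 := hs.1.ne'
    unfold chordValue
    fun_prop (disch := assumption)
  · rw [interior_Ioc]
    intro s hs
    have hs0 : s ≠ 0 := hs.1.ne'
    refine (((hasDerivAt_chordValue hs0 (hmem s hs)).pow 2).add
      ((Real.hasDerivAt_log hs0).const_mul _)).congr_deriv ?_ |>.hasDerivWithinAt
    field_simp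
    ring
  · rw [interior_Ioc]
    intro s hs
    exact mul_nonneg (div_nonneg zero_le_two (pow_nonneg hs.1.le 3))
      (sub_nonneg.2 (chordValue_mul_tangentGap_le hb hδ.le hs.1 hs.2.le (hmem s hs)))

/-- Bobkov's two-point inequality, made asymmetric: only the endpoint `a` carries a square term,
because a coordinate can be pivotal only where it is erased. The bound compares the values at
`s = p` and `s = 1` of the function in `monotoneOn_chordValue_sq_add_log`. -/
theorem gaussianProfile_convexComb_le {p a b : ℝ} (hp0 : 0 < p) (hp1 : p ≤ 1) (hb : 0 ≤ b)
    (hba : b ≤ a) (ha : a ≤ 1) :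
    gaussianProfile (p * a + (1 - p) * b) ≤
      p * √(gaussianProfile a ^ 2 + -2 * Real.log p * (a - b) ^ 2) +
        (1 - p) * gaussianProfile b := by
  rcases hba.eq_or_lt with rfl | hba
  · have : p * b + (1 - p) * b = b := by ring
    simp only [sub_self, ne_eq, OfNat.ofNat_ne_zero, not_false_eq_true, zero_pow, mul_zero,
      add_zero, Real.sqrt_sq (gaussianProfile_nonneg b), this]
    linarith
  obtain ⟨δ, hδ, rfl⟩ : ∃ δ, 0 < δ ∧ a = b + δ := ⟨a - b, sub_pos.2 hba, by ring⟩
  have mono := monotoneOn_chordValue_sq_add_log hb hδ ha ⟨hp0, hp1⟩ ⟨one_pos, le_rfl⟩ hp1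
  have chord_le : chordValue b δ p ≤
      √(gaussianProfile (b + δ) ^ 2 + -2 * Real.log p * (b + δ - b) ^ 2) := by
    refine Real.le_sqrt_of_sq_le ?_
    have chord_one : chordValue b δ 1 = gaussianProfile (b + δ) := by simp [chordValue]
    simp only [chord_one, Real.log_one] at mono
    rw [add_sub_cancel_left]
    linarith
  have chord_eq : gaussianProfile (p * (b + δ) + (1 - p) * b) =
      p * chordValue b δ p + (1 - p) * gaussianProfile b := by
    rw [chordValue, show p * (b + δ) + (1 - p) * b = b + p * δ by ring]
    field_simp
    ring
  rw [chord_eq]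
  gcongr

/-! ### Increasing events of erasure patterns -/

section ErasurePatterns

variable {n : ℕ}

lemma wH_le (ω : Pattern n) : wH ω ≤ n := by
  simpa [wH] using hammingNorm_le_card_fintype (x := ω)

lemma wH_cons (c : ZMod 2) (ω : Pattern n) :
    wH (Fin.cons c ω : Pattern (n + 1)) = (if c ≠ 0 then 1 else 0) + wH ω := by
  simp only [wH, hammingNorm, card_filter, Fin.sum_univ_succ, Fin.cons_zero, Fin.cons_succ]

/-- The probability of the erasure pattern `ω` over the channel of erasure probability `p`. -/
def bernoulliWeight (p : ℝ) (ω : Pattern n) : ℝ := p ^ wH ω * (1 - p) ^ (n - wH ω)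

lemma bernoulliWeight_pos {p : ℝ} (hp : p ∈ Set.Ioo (0 : ℝ) 1) (ω : Pattern n) :
    0 < bernoulliWeight p ω :=
  mul_pos (pow_pos hp.1 _) (pow_pos (sub_pos.2 hp.2) _)

lemma bernoulliWeight_nonneg {p : ℝ} (hp : p ∈ Set.Icc (0 : ℝ) 1) (ω : Pattern n) :
    0 ≤ bernoulliWeight p ω :=
  mul_nonneg (pow_nonneg hp.1 _) (pow_nonneg (sub_nonneg.2 hp.2) _)

lemma bernoulliWeight_cons_one (p : ℝ) (ω : Pattern n) :
    bernoulliWeight p (Fin.cons 1 ω : Pattern (n + 1)) = p * bernoulliWeight p ω := by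
  simp only [bernoulliWeight, wH_cons, ne_eq, one_ne_zero, not_false_eq_true, if_true, add_comm 1,
    Nat.add_sub_add_right, pow_succ]
  ring

lemma bernoulliWeight_cons_zero (p : ℝ) (ω : Pattern n) :
    bernoulliWeight p (Fin.cons 0 ω : Pattern (n + 1)) = (1 - p) * bernoulliWeight p ω := by
  simp only [bernoulliWeight, wH_cons, ne_eq, not_true_eq_false, if_false, zero_add,
    Nat.sub_add_comm (wH_le ω), pow_succ]
  ring

/-- Expectation with respect to the product Bernoulli measure `μ_p`. -/
def bernoulliExp (p : ℝ) : (Pattern n → ℝ) →ₗ[ℝ] ℝ :=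
  ∑ ω, bernoulliWeight p ω • LinearMap.proj ω

lemma bernoulliExp_apply (p : ℝ) (f : Pattern n → ℝ) :
    bernoulliExp p f = ∑ ω, bernoulliWeight p ω * f ω := by
  simp [bernoulliExp]

lemma bernoulliExp_mono {p : ℝ} (hp : p ∈ Set.Icc (0 : ℝ) 1) {f g : Pattern n → ℝ} (hfg : f ≤ g) :
    bernoulliExp p f ≤ bernoulliExp p g := by
  simp only [bernoulliExp_apply]
  exact sum_le_sum fun ω _ => mul_le_mul_of_nonneg_left (hfg ω) (bernoulliWeight_nonneg hp ω)

lemma bernoulliExp_of_isEmpty (p : ℝ) (f : Pattern 0 → ℝ) : bernoulliExp p f = f 0 := by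
  rw [bernoulliExp_apply, Fintype.sum_unique, bernoulliWeight, Nat.le_zero.1 (wH_le _)]
  simp only [pow_zero, zero_tsub, mul_one, one_mul]
  exact congrArg f (Subsingleton.elim _ _)

lemma bernoulliExp_succ (p : ℝ) (f : Pattern (n + 1) → ℝ) :
    bernoulliExp p f =
      p * bernoulliExp p (fun ω : Pattern n => f (Fin.cons 1 ω : Pattern (n + 1))) +
        (1 - p) * bernoulliExp p (fun ω : Pattern n => f (Fin.cons 0 ω : Pattern (n + 1))) := by
  simp only [bernoulliExp_apply, mul_sum, ← mul_assoc, ← bernoulliWeight_cons_one,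
    ← bernoulliWeight_cons_zero]
  rw [← (Fin.consEquiv fun _ => ZMod 2).sum_comp, Fintype.sum_prod_type]
  exact (Fin.sum_univ_two _).trans (add_comm _ _)

lemma sqrt_bernoulliExp_sq_add_sq_le {p : ℝ} (hp : p ∈ Set.Icc (0 : ℝ) 1) (f g : Pattern n → ℝ) :
    √(bernoulliExp p f ^ 2 + bernoulliExp p g ^ 2) ≤
      bernoulliExp p fun ω => √(f ω ^ 2 + g ω ^ 2) := by
  simp only [bernoulliExp_apply]
  refine (sqrt_sum_sq_add_sum_sq_le _ _ _).trans_eq (sum_congr rfl fun ω _ => ?_)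
  rw [mul_pow, mul_pow, ← mul_add, Real.sqrt_mul (sq_nonneg _),
    Real.sqrt_sq (bernoulliWeight_nonneg hp ω)]

lemma muE_eq_sum_bernoulliWeight (p : ℝ) (A : Finset (Pattern n)) :
    muE p A = ∑ ω ∈ A, bernoulliWeight p ω := rfl

lemma muE_eq_bernoulliExp (p : ℝ) (A : Finset (Pattern n)) :
    muE p A = bernoulliExp p fun ω => if ω ∈ A then 1 else 0 := by
  simp [muE_eq_sum_bernoulliWeight, bernoulliExp_apply]

lemma muE_univ (p : ℝ) : muE p (univ : Finset (Pattern n)) = 1 := by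
  rw [muE_eq_bernoulliExp]
  simp only [mem_univ, if_true]
  induction n with
  | zero => exact bernoulliExp_of_isEmpty p _
  | succ n ih => rw [bernoulliExp_succ, ih]; ring

lemma muE_pos {p : ℝ} (hp : p ∈ Set.Ioo (0 : ℝ) 1) {A : Finset (Pattern n)} (hA : A.Nonempty) :
    0 < muE p A :=
  sum_pos (fun ω _ => bernoulliWeight_pos hp ω) hA

lemma muE_mono {p : ℝ} (hp : p ∈ Set.Icc (0 : ℝ) 1) {A B : Finset (Pattern n)} (hAB : A ⊆ B) :
    muE p A ≤ muE p B :=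
  sum_le_sum_of_subset_of_nonneg hAB fun ω _ _ => bernoulliWeight_nonneg hp ω

lemma muE_sdiff (p : ℝ) {A B : Finset (Pattern n)} (hAB : A ⊆ B) :
    muE p (B \ A) = muE p B - muE p A :=
  eq_sub_of_add_eq (sum_sdiff hAB)

lemma muE_mem_Icc {p : ℝ} (hp : p ∈ Set.Icc (0 : ℝ) 1) (A : Finset (Pattern n)) :
    muE p A ∈ Set.Icc (0 : ℝ) 1 :=
  ⟨sum_nonneg fun ω _ => bernoulliWeight_nonneg hp ω,
    (muE_mono hp (subset_univ A)).trans_eq (muE_univ p)⟩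

lemma muE_mem_Ioo {p : ℝ} (hp : p ∈ Set.Ioo (0 : ℝ) 1) {A : Finset (Pattern n)}
    (hA : A.Nonempty) (hA' : A ≠ univ) : muE p A ∈ Set.Ioo (0 : ℝ) 1 := by
  refine ⟨muE_pos hp hA, sub_pos.1 ?_⟩
  rw [← muE_univ p, ← muE_sdiff p (subset_univ A)]
  exact muE_pos hp (sdiff_nonempty.2 fun h => hA' (univ_subset_iff.1 h))

/-- The event that `ω`, prefixed by the coordinate `c`, belongs to `A`. -/
def patternSection (c : ZMod 2) (A : Finset (Pattern (n + 1))) : Finset (Pattern n) :=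
  univ.filter fun ω => (Fin.cons c ω : Pattern (n + 1)) ∈ A

lemma mem_patternSection {c : ZMod 2} {A : Finset (Pattern (n + 1))} {ω : Pattern n} :
    ω ∈ patternSection c A ↔ (Fin.cons c ω : Pattern (n + 1)) ∈ A := by
  simp [patternSection]

lemma muE_succ (p : ℝ) (A : Finset (Pattern (n + 1))) :
    muE p A = p * muE p (patternSection 1 A) + (1 - p) * muE p (patternSection 0 A) := by
  simp only [muE_eq_bernoulliExp, bernoulliExp_succ, mem_patternSection]

/-- An event that persists when further coordinates are erased. -/
def IsIncreasing (A : Finset (Pattern n)) : Prop := ∀ ⦃ω x⦄, covers ω x → x ∈ A → ω ∈ A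

lemma covers_cons {c d : ZMod 2} (hcd : d ≠ 0 → c ≠ 0) {ω x : Pattern n} (h : covers ω x) :
    covers (Fin.cons c ω : Pattern (n + 1)) (Fin.cons d x : Pattern (n + 1)) :=
  Fin.cases hcd h

lemma isIncreasing_patternSection {A : Finset (Pattern (n + 1))} (hA : IsIncreasing A)
    (c : ZMod 2) : IsIncreasing (patternSection c A) := fun _ _ hωx hx =>
  mem_patternSection.2 (hA (covers_cons id hωx) (mem_patternSection.1 hx))

lemma patternSection_zero_subset {A : Finset (Pattern (n + 1))} (hA : IsIncreasing A) :
    patternSection 0 A ⊆ patternSection 1 A := fun _ hω =>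
  mem_patternSection.2
    (hA (covers_cons (fun _ => one_ne_zero) fun _ => id) (mem_patternSection.1 hω))

/-- The pivotal coordinates of `ω ∈ A`: those whose restoration takes `ω` out of `A`. There are
none when `ω ∉ A`. For increasing `A` their number is the boundary function `h_A` of Margulis and
Talagrand. -/
def pivotal (A : Finset (Pattern n)) (ω : Pattern n) : Finset (Fin n) :=
  univ.filter fun i => ω ∈ A ∧ Function.update ω i 0 ∉ A

lemma mem_pivotal {A : Finset (Pattern n)} {ω : Pattern n} {i : Fin n} :
    i ∈ pivotal A ω ↔ ω ∈ A ∧ Function.update ω i 0 ∉ A := by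
  simp [pivotal]

lemma card_pivotal_cons (A : Finset (Pattern (n + 1))) (c : ZMod 2) (ω : Pattern n) :
    #(pivotal A (Fin.cons c ω : Pattern (n + 1))) = #(pivotal (patternSection c A) ω) +
      if ω ∈ patternSection c A \ patternSection 0 A then 1 else 0 := by
  simp only [pivotal, card_filter, Fin.sum_univ_succ, Fin.update_cons_zero, ← Fin.cons_update,
    Finset.mem_sdiff, mem_patternSection]
  exact add_comm _ _

lemma card_pivotal_cons_zero (A : Finset (Pattern (n + 1))) (ω : Pattern n) :
    #(pivotal A (Fin.cons 0 ω : Pattern (n + 1))) = #(pivotal (patternSection 0 A) ω) := by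
  simp [card_pivotal_cons]

lemma bernoulliExp_card_pivotal_succ (p : ℝ) {A : Finset (Pattern (n + 1))} (hA : IsIncreasing A) :
    bernoulliExp p (fun ω => (#(pivotal A ω) : ℝ)) =
      p * (bernoulliExp p (fun ω => (#(pivotal (patternSection 1 A) ω) : ℝ)) +
          (muE p (patternSection 1 A) - muE p (patternSection 0 A))) +
        (1 - p) * bernoulliExp p (fun ω => (#(pivotal (patternSection 0 A) ω) : ℝ)) := by
  rw [bernoulliExp_succ, ← muE_sdiff p (patternSection_zero_subset hA), muE_eq_bernoulliExp,
    ← map_add]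
  simp only [card_pivotal_cons_zero, card_pivotal_cons A 1, Nat.cast_add, Nat.cast_ite,
    Nat.cast_one, Nat.cast_zero]
  rfl

theorem hasDerivAt_muE {A : Finset (Pattern n)} (hA : IsIncreasing A) {p : ℝ} (hp : p ≠ 0) :
    HasDerivAt (fun q => muE q A) (bernoulliExp p (fun ω => (#(pivotal A ω) : ℝ)) / p) p := by
  induction n with
  | zero =>
    simp only [muE_eq_bernoulliExp, bernoulliExp_of_isEmpty, pivotal, univ_eq_empty, filter_empty,
      card_empty, Nat.cast_zero, zero_div]
    exact hasDerivAt_const _ _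
  | succ n ih =>
    simp only [muE_succ _ A, bernoulliExp_card_pivotal_succ p hA]
    refine (((hasDerivAt_id p).mul (ih (isIncreasing_patternSection hA 1))).add
      (((hasDerivAt_id p).const_sub 1).mul (ih (isIncreasing_patternSection hA 0)))).congr_deriv ?_
    simp only [id]
    field_simp
    ring

lemma sqrt_gaussianProfile_sq_add_le {p : ℝ} (hp : p ∈ Set.Icc (0 : ℝ) 1)
    {c : ℝ} (hc : 0 ≤ c) {A : Finset (Pattern (n + 1))} (hA : IsIncreasing A)
    (ih : gaussianProfile (muE p (patternSection 1 A)) ≤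
      bernoulliExp p fun ω => √(c * #(pivotal (patternSection 1 A) ω))) :
    √(gaussianProfile (muE p (patternSection 1 A)) ^ 2 +
        c * (muE p (patternSection 1 A) - muE p (patternSection 0 A)) ^ 2) ≤
      bernoulliExp p fun ω : Pattern n =>
        √(c * #(pivotal A (Fin.cons 1 ω : Pattern (n + 1)))) := by
  set A₀ := patternSection 0 A
  set A₁ := patternSection 1 A
  let jump : Pattern n → ℝ := fun ω => if ω ∈ A₁ \ A₀ then 1 else 0
  have exp_jump : bernoulliExp p (√c • jump) = √c * (muE p A₁ - muE p A₀) := by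
    rw [map_smul, ← muE_eq_bernoulliExp, muE_sdiff p (patternSection_zero_subset hA), smul_eq_mul]
  calc √(gaussianProfile (muE p A₁) ^ 2 + c * (muE p A₁ - muE p A₀) ^ 2)
      ≤ √(bernoulliExp p (fun ω => √(c * #(pivotal A₁ ω))) ^ 2 +
          bernoulliExp p (√c • jump) ^ 2) := by
        rw [exp_jump, mul_pow, Real.sq_sqrt hc]
        have := gaussianProfile_nonneg (muE p A₁)
        gcongr
    _ ≤ bernoulliExp p fun ω => √(√(c * #(pivotal A₁ ω)) ^ 2 + (√c • jump) ω ^ 2) :=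
        sqrt_bernoulliExp_sq_add_sq_le hp _ _
    _ = bernoulliExp p fun ω => √(c * #(pivotal A (Fin.cons 1 ω : Pattern (n + 1)))) := by
        congr! 3 with ω
        rw [Real.sq_sqrt (by positivity), Pi.smul_apply, smul_eq_mul, mul_pow, Real.sq_sqrt hc,
          card_pivotal_cons]
        simp only [jump, Nat.cast_add, Nat.cast_ite, ite_pow, Nat.cast_one, Nat.cast_zero, one_pow,
          zero_pow two_ne_zero]
        ring

theorem gaussianProfile_muE_le {p : ℝ} (hp0 : 0 < p) (hp1 : p ≤ 1) {A : Finset (Pattern n)}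
    (hA : IsIncreasing A) :
    gaussianProfile (muE p A) ≤ bernoulliExp p fun ω => √(-2 * Real.log p * #(pivotal A ω)) := by
  have hp : p ∈ Set.Icc (0 : ℝ) 1 := ⟨hp0.le, hp1⟩
  have hc : 0 ≤ -2 * Real.log p := by linarith [Real.log_nonpos hp0.le hp1]
  induction n with
  | zero =>
    have : gaussianProfile (muE p A) = 0 := by
      rw [muE_eq_bernoulliExp, bernoulliExp_of_isEmpty]
      split_ifs <;> exact gaussianProfile_of_notMem (by simp)
    rw [this, bernoulliExp_of_isEmpty]
    exact Real.sqrt_nonneg _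
  | succ n ih =>
    have ih₀ := ih (isIncreasing_patternSection hA 0)
    have ih₁ := ih (isIncreasing_patternSection hA 1)
    set A₀ := patternSection 0 A
    set A₁ := patternSection 1 A
    calc gaussianProfile (muE p A)
        = gaussianProfile (p * muE p A₁ + (1 - p) * muE p A₀) := by rw [muE_succ]
      _ ≤ p * √(gaussianProfile (muE p A₁) ^ 2 +
            -2 * Real.log p * (muE p A₁ - muE p A₀) ^ 2) +
          (1 - p) * gaussianProfile (muE p A₀) :=
        gaussianProfile_convexComb_le hp0 hp1 (muE_mem_Icc hp A₀).1
          (muE_mono hp (patternSection_zero_subset hA)) (muE_mem_Icc hp A₁).2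
      _ ≤ p * bernoulliExp p (fun ω : Pattern n =>
            √(-2 * Real.log p * #(pivotal A (Fin.cons 1 ω : Pattern (n + 1))))) +
          (1 - p) * bernoulliExp p (fun ω => √(-2 * Real.log p * #(pivotal A₀ ω))) :=
        add_le_add (mul_le_mul_of_nonneg_left (sqrt_gaussianProfile_sq_add_le hp hc hA ih₁) hp0.le)
          (mul_le_mul_of_nonneg_left ih₀ (sub_nonneg.2 hp1))
      _ = bernoulliExp p fun ω => √(-2 * Real.log p * #(pivotal A ω)) := by
        simp only [bernoulliExp_succ p, card_pivotal_cons_zero, A₀]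

lemma sqrt_mul_gaussianProfile_muE_le {p : ℝ} (hp0 : 0 < p) (hp1 : p ≤ 1)
    {A : Finset (Pattern n)} (hA : IsIncreasing A) {d : ℕ}
    (hd : ∀ ω, (pivotal A ω).Nonempty → d ≤ #(pivotal A ω)) :
    √(2 * d) * gaussianProfile (muE p A) ≤
      2 * √(-Real.log p) * bernoulliExp p fun ω => (#(pivotal A ω) : ℝ) := by
  have hlog : 0 ≤ -Real.log p := neg_nonneg.2 (Real.log_nonpos hp0.le hp1)
  have pointwise (ω : Pattern n) : √(2 * d) * √(-2 * Real.log p * #(pivotal A ω)) ≤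
      2 * √(-Real.log p) * #(pivotal A ω) := by
    rcases (pivotal A ω).eq_empty_or_nonempty with h | h
    · simp [h]
    · calc √(2 * d) * √(-2 * Real.log p * #(pivotal A ω))
          ≤ √(2 * #(pivotal A ω)) * √(-Real.log p * (2 * #(pivotal A ω))) := by
            have := hd ω h
            rw [show -2 * Real.log p * #(pivotal A ω) = -Real.log p * (2 * #(pivotal A ω)) by ring]
            gcongr
        _ = 2 * √(-Real.log p) * #(pivotal A ω) := by
            rw [Real.sqrt_mul hlog, mul_left_comm, Real.mul_self_sqrt (by positivity)]
            ring
  calc √(2 * d) * gaussianProfile (muE p A)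
      ≤ √(2 * d) * bernoulliExp p fun ω => √(-2 * Real.log p * #(pivotal A ω)) :=
        mul_le_mul_of_nonneg_left (gaussianProfile_muE_le hp0 hp1 hA) (Real.sqrt_nonneg _)
    _ = bernoulliExp p fun ω => √(2 * d) * √(-2 * Real.log p * #(pivotal A ω)) :=
        (map_smul (bernoulliExp p) _ _).symm
    _ ≤ bernoulliExp p fun ω => 2 * √(-Real.log p) * #(pivotal A ω) :=
        bernoulliExp_mono ⟨hp0.le, hp1⟩ pointwise
    _ = 2 * √(-Real.log p) * bernoulliExp p fun ω => (#(pivotal A ω) : ℝ) :=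
        map_smul (bernoulliExp p) _ _

theorem monotoneOn_normalQuantile_muE_add {A : Finset (Pattern n)} (hA : IsIncreasing A)
    (hne : A.Nonempty) (hne' : A ≠ univ) {d : ℕ}
    (hd : ∀ ω, (pivotal A ω).Nonempty → d ≤ #(pivotal A ω)) :
    MonotoneOn (fun p => normalQuantile (muE p A) + √(2 * d) * √(-Real.log p)) (Set.Ioo 0 1) := by
  have deriv_sum : ∀ p ∈ Set.Ioo (0 : ℝ) 1, HasDerivAt
      (fun p => normalQuantile (muE p A) + √(2 * d) * √(-Real.log p))
      ((gaussianProfile (muE p A))⁻¹ * (bernoulliExp p (fun ω => (#(pivotal A ω) : ℝ)) / p) +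
        √(2 * d) * (-p⁻¹ / (2 * √(-Real.log p)))) p := fun p hp =>
    ((hasDerivAt_normalQuantile (muE_mem_Ioo hp hne hne')).comp p (hasDerivAt_muE hA hp.1.ne')).add
      (((Real.hasDerivAt_log hp.1.ne').neg.sqrt
        (neg_pos.2 (Real.log_neg hp.1 hp.2)).ne').const_mul _)
  refine monotoneOn_of_hasDerivWithinAt_nonneg (convex_Ioo 0 1)
    (fun p hp => (deriv_sum p hp).continuousAt.continuousWithinAt)
    (fun p hp => (deriv_sum p (interior_subset hp)).hasDerivWithinAt) fun p hp => ?_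
  rw [interior_Ioo] at hp
  have hp0 : 0 < p := hp.1
  have hI : 0 < gaussianProfile (muE p A) := gaussianProfile_pos (muE_mem_Ioo hp hne hne')
  have hL : 0 < √(-Real.log p) := Real.sqrt_pos.2 (neg_pos.2 (Real.log_neg hp.1 hp.2))
  have common : (gaussianProfile (muE p A))⁻¹ *
        (bernoulliExp p (fun ω => (#(pivotal A ω) : ℝ)) / p) +
        √(2 * d) * (-p⁻¹ / (2 * √(-Real.log p))) =
      (2 * √(-Real.log p) * bernoulliExp p (fun ω => (#(pivotal A ω) : ℝ)) -
        √(2 * d) * gaussianProfile (muE p A)) /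
        (2 * √(-Real.log p) * p * gaussianProfile (muE p A)) := by
    field_simp
    ring
  rw [common]
  exact div_nonneg (sub_nonneg.2 (sqrt_mul_gaussianProfile_muE_le hp0 hp.2.le hA hd))
    (by positivity)

theorem tillich_zemor_BEC_general {A : Finset (Pattern n)} (hA : IsIncreasing A) {d : ℕ}
    (hd : ∀ ω, (pivotal A ω).Nonempty → d ≤ #(pivotal A ω)) {εstar x : ℝ}
    (hεstar : εstar ∈ Set.Ioo (0 : ℝ) 1) (hx : muE εstar A = Phi x) :
    (∀ ε : ℝ, 0 < ε → ε < εstar →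
      muE ε A ≤ Phi (x + √(2 * d) * (√(-Real.log εstar) - √(-Real.log ε)))) ∧
    (∀ ε : ℝ, εstar < ε → ε < 1 →
      muE ε A ≥ Phi (x + √(2 * d) * (√(-Real.log εstar) - √(-Real.log ε)))) := by
  have hne : A.Nonempty := by
    rw [nonempty_iff_ne_empty]
    rintro rfl
    exact (Phi_mem_Ioo x).1.ne hx
  have hne' : A ≠ univ := by
    rintro rfl
    exact (Phi_mem_Ioo x).2.ne (hx.symm.trans (muE_univ εstar))
  have mono := monotoneOn_normalQuantile_muE_add hA hne hne' hd
  have quantile_star : normalQuantile (muE εstar A) = x := by rw [hx, normalQuantile_Phi]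
  refine ⟨fun ε h0 h => ?_, fun ε h h1 => ?_⟩
  · have hε : ε ∈ Set.Ioo (0 : ℝ) 1 := ⟨h0, h.trans hεstar.2⟩
    rw [← Phi_normalQuantile (muE_mem_Ioo hε hne hne')]
    refine strictMono_Phi.monotone ?_
    linarith [mono hε hεstar h.le]
  · have hε : ε ∈ Set.Ioo (0 : ℝ) 1 := ⟨hεstar.1.trans h, h1⟩
    rw [ge_iff_le, ← Phi_normalQuantile (muE_mem_Ioo hε hne hne')]
    refine strictMono_Phi.monotone ?_
    linarith [mono hεstar hε h.le]

end ErasurePatterns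

/-! ### Block errors of linear codes -/

section LinearCodes

variable {N : ℕ} {C : Submodule (ZMod 2) (Pattern N)}

lemma mem_errBEC {ω : Pattern N} : ω ∈ errBEC C ↔ ∃ x ∈ C, x ≠ 0 ∧ covers ω x := by
  simp [errBEC]

lemma isIncreasing_errBEC (C : Submodule (ZMod 2) (Pattern N)) : IsIncreasing (errBEC C) := by
  intro ω ω' hωω' hω'
  obtain ⟨x, hx, hx0, hcov⟩ := mem_errBEC.1 hω'
  exact mem_errBEC.2 ⟨x, hx, hx0, fun i hi => hωω' i (hcov i hi)⟩

lemma covers_update_zero_iff {ω x : Pattern N} {i : Fin N} :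
    covers (Function.update ω i 0) x ↔ covers ω x ∧ x i = 0 := by
  simp only [covers, Function.update_apply]
  grind

lemma mem_pivotal_errBEC_iff {ω : Pattern N} {i : Fin N} :
    i ∈ pivotal (errBEC C) ω ↔
      ω ∈ errBEC C ∧ ∀ x ∈ C, x ≠ 0 → covers ω x → x i ≠ 0 := by
  simp only [mem_pivotal, mem_errBEC (ω := Function.update _ _ _), covers_update_zero_iff]
  grind

lemma covers.sub {ω x y : Pattern N} (hx : covers ω x) (hy : covers ω y) : covers ω (x - y) := by
  intro i hi hω
  simp [not_imp_not.1 (hx i) hω, not_imp_not.1 (hy i) hω] at hi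

lemma eq_of_covers_of_mem_pivotal {ω : Pattern N} {i : Fin N} (hi : i ∈ pivotal (errBEC C) ω)
    {x y : Pattern N} (hx : x ∈ C) (hx0 : x ≠ 0) (hωx : covers ω x) (hy : y ∈ C) (hy0 : y ≠ 0)
    (hωy : covers ω y) : x = y := by
  have support := (mem_pivotal_errBEC_iff.1 hi).2
  have sub_eq_zero_of_ne_zero : ∀ a b : ZMod 2, a ≠ 0 → b ≠ 0 → a - b = 0 := by decide
  by_contra hne
  exact support (x - y) (C.sub_mem hx hy) (sub_ne_zero.2 hne) (hωx.sub hωy)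
    (sub_eq_zero_of_ne_zero _ _ (support x hx hx0 hωx) (support y hy hy0 hωy))

lemma le_card_pivotal_errBEC {d : ℕ} (hd : ∀ x ∈ C, x ≠ 0 → d ≤ wH x) {ω : Pattern N}
    (hω : (pivotal (errBEC C) ω).Nonempty) : d ≤ #(pivotal (errBEC C) ω) := by
  obtain ⟨i, hi⟩ := hω
  have hmem := (mem_pivotal_errBEC_iff.1 hi).1
  obtain ⟨x, hx, hx0, hωx⟩ := mem_errBEC.1 hmem
  have support_subset : univ.filter (fun j => x j ≠ 0) ⊆ pivotal (errBEC C) ω := by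
    intro j hj
    refine mem_pivotal_errBEC_iff.2 ⟨hmem, fun y hy hy0 hωy => ?_⟩
    rw [eq_of_covers_of_mem_pivotal hi hy hy0 hωy hx hx0 hωx]
    exact (mem_filter.1 hj).2
  exact (hd x hx hx0).trans (card_le_card support_subset)

end LinearCodes

theorem tillich_zemor_BEC (N dmin : ℕ) (C : Submodule (ZMod 2) (Pattern N))
    (hdmin : IsLeast {w : ℕ | ∃ x ∈ C, x ≠ 0 ∧ wH x = w} dmin)
    (εstar : ℝ) (hεstar : εstar ∈ Set.Ioo (0 : ℝ) 1)
    (hhalf : Pmap C εstar = 1 / 2) :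
    (∀ ε : ℝ, 0 < ε → ε < εstar →
      Pmap C ε ≤
        Phi (Real.sqrt (2 * dmin) * (Real.sqrt (-Real.log εstar) - Real.sqrt (-Real.log ε)))) ∧
    (∀ ε : ℝ, εstar < ε → ε < 1 →
      Pmap C ε ≥
        Phi (Real.sqrt (2 * dmin) * (Real.sqrt (-Real.log εstar) - Real.sqrt (-Real.log ε)))) := by
  have hd : ∀ x ∈ C, x ≠ 0 → dmin ≤ wH x := fun x hx hx0 => hdmin.2 ⟨x, hx, hx0, rfl⟩
  simpa [Pmap] using tillich_zemor_BEC_general (isIncreasing_errBEC C)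
    (fun _ => le_card_pivotal_errBEC hd) hεstar (hhalf.trans Phi_zero.symm)

end
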